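/- Let x : [a,s₀] → M be a nonconstant C² solution of (E−V(x)) D/ds ẋ − g(∇V(x),ẋ) ẋ + ½ g(ẋ,ẋ) ∇V(x) = 0 on (a,s₀), with ½(E−V(x)) g(ẋ,ẋ) ≡ c_x > 0, x(s) ∈ V⁻¹((−∞,E)) for s < s₀, and x(s₀) ∈ V⁻¹(E). Then there exist constants 0 < c₁ ≤ c₂ and a neighborhood of s₀ in which c₁ (s₀−s)^{2/3} ≤ E − V(x(s)) ≤ c₂ (s₀−s)^{2/3}; consequently the map t(s) = ∫_a^s √(c_x)/(E−V(x(τ))) dτ is bounded on [a,s₀), and its bound can be chosen uniformly over all such solutions x with c_x bounded by a fixed constant. -/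

import Mathlib

open MeasureTheory Set Matrix Filter Topology

namespace JacobiPaper

noncomputable section

/-- Points/vectors of the ambient space `ℝ^N` in which the manifold `M` is
topologically embedded as an open subset. -/
abbrev Vec (N : ℕ) := Fin N → ℝ

variable {N : ℕ}

/-- The inner product determined by a field of matrices `g` at the point `x`. -/
def gP (g : Vec N → Matrix (Fin N) (Fin N) ℝ) (x v w : Vec N) : ℝ :=
  ∑ i, ∑ j, g x i j * v i * w j

/-- The Euclidean gradient (the differential, as a vector). -/
def euclGrad (V : Vec N → ℝ) (x : Vec N) : Vec N :=
  fun i => fderiv ℝ V x (Pi.single i 1)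

/-- The setting of the paper: a `C³` Riemannian metric `g` on a neighborhood `U` of
the compact sublevel `V⁻¹((-∞,E])`, with `V` of class `C²` there and `E` a regular
value of `V`. -/
structure Setting (N : ℕ) where
  g : Vec N → Matrix (Fin N) (Fin N) ℝ
  V : Vec N → ℝ
  E : ℝ
  U : Set (Vec N)
  hdim : 1 ≤ N
  hU : IsOpen U
  hsub : {x | V x ≤ E} ⊆ U
  hgC : ∀ i j, ContDiffOn ℝ 3 (fun x => g x i j) U
  hgsymm : ∀ x ∈ U, ∀ i j, g x i j = g x j i
  hgpos : ∀ x ∈ U, ∀ v : Vec N, v ≠ 0 → 0 < gP g x v v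
  hVC : ContDiffOn ℝ 2 V U
  hreg : ∀ x, V x = E → euclGrad V x ≠ 0
  hcomp : IsCompact {x : Vec N | V x ≤ E}

namespace Setting

variable (S : Setting N)

/-- The Riemannian inner product `g_x(v,w)`. -/
def prod (x v w : Vec N) : ℝ := gP S.g x v w

/-- The Riemannian norm `‖v‖_x`. -/
def gnorm (x v : Vec N) : ℝ := Real.sqrt (S.prod x v v)

/-- The gradient of `V` with respect to `g`. -/
def grad (x : Vec N) : Vec N := (S.g x)⁻¹ *ᵥ euclGrad S.V x

/-- Christoffel symbols `Γ^k_{ij}` of the Levi-Civita connection of `g`. -/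
def christoffel (x : Vec N) (k i j : Fin N) : ℝ :=
  (1/2) * ∑ l, (S.g x)⁻¹ k l *
    (fderiv ℝ (fun y => S.g y l j) x (Pi.single i 1)
     + fderiv ℝ (fun y => S.g y l i) x (Pi.single j 1)
     - fderiv ℝ (fun y => S.g y i j) x (Pi.single l 1))

/-- Covariant derivative, along the curve `q` with velocity `q'`, of the vector field
`ξ` whose (pointwise) derivative is `ξ'`. -/
def covD (q q' ξ ξ' : ℝ → Vec N) (s : ℝ) : Vec N :=
  fun k => ξ' s k + ∑ i, ∑ j, S.christoffel (q s) k i j * q' s i * ξ s j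

/-- The Riemann curvature tensor `R(u,v)w` of `g` at `x`. -/
def curv (x u v w : Vec N) : Vec N :=
  fun l => ∑ i, ∑ j, ∑ k, u i * v j * w k *
    (fderiv ℝ (fun y => S.christoffel y l j k) x (Pi.single i 1)
     - fderiv ℝ (fun y => S.christoffel y l i k) x (Pi.single j 1)
     + ∑ m, (S.christoffel x l i m * S.christoffel x m j k
             - S.christoffel x l j m * S.christoffel x m i k))

/-- The Hessian operator of `V` with respect to `g`: `ξ ↦ ∇_ξ ∇V`. -/
def hessV (x ξ : Vec N) : Vec N :=
  fun k => ∑ i, ξ i * (fderiv ℝ (fun y => S.grad y k) x (Pi.single i 1)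
    + ∑ j, S.christoffel x k i j * S.grad x j)

/-- The Jacobi-metric geodesic equation (eq. (2.5) of the paper) at the instant `s`,
for a curve `x` with derivative `x'` and second derivative `x''`. -/
def GeoEqAt (x x' x'' : ℝ → Vec N) (s : ℝ) : Prop :=
  ∀ k, (S.E - S.V (x s)) * S.covD x x' x' x'' s k
    - S.prod (x s) (S.grad (x s)) (x' s) * x' s k
    + (1/2) * S.prod (x s) (x' s) (x' s) * S.grad (x s) k = 0

end Setting

/-- `q` is of class `C²` on `I` with first derivative `q'` and second derivative `q''`. -/
def C2OnWith (q q' q'' : ℝ → Vec N) (I : Set ℝ) : Prop :=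
  (∀ t ∈ I, HasDerivWithinAt q (q' t) I t) ∧
  (∀ t ∈ I, HasDerivWithinAt q' (q'' t) I t) ∧
  ContinuousOn q'' I

/-- `x` belongs to the Sobolev space `H¹([a,b],ℝ^N)`: it is absolutely continuous
(primitive of its a.e. derivative) with square-integrable derivative. -/
def H1On (x : ℝ → Vec N) (a b : ℝ) : Prop :=
  ContinuousOn x (Icc a b) ∧
  IntegrableOn (deriv x) (Icc a b) ∧
  IntegrableOn (fun s => ‖deriv x s‖ ^ 2) (Icc a b) ∧
  ∀ t ∈ Icc a b, x t = x a + ∫ s in a..t, deriv x s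

/-- `x` is absolutely continuous on `[a,b]`. -/
def ACOn (x : ℝ → Vec N) (a b : ℝ) : Prop :=
  ContinuousOn x (Icc a b) ∧
  IntegrableOn (deriv x) (Icc a b) ∧
  ∀ t ∈ Icc a b, x t = x a + ∫ s in a..t, deriv x s

namespace Setting

variable (S : Setting N)

/-- The weak (distributional) form (eq. (2.7)) of the Jacobi geodesic equation on `(a,b)`,
tested against all `ξ ∈ C^∞_0((a,b),ℝ^N)`. -/
def WeakGeo (x : ℝ → Vec N) (a b : ℝ) : Prop :=
  ∀ ξ : ℝ → Vec N, ContDiff ℝ (⊤ : ℕ∞) ξ → tsupport ξ ⊆ Ioo a b →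
    (∫ s in a..b,
      ((S.E - S.V (x s)) * S.prod (x s) (deriv x s) (S.covD x (deriv x) ξ (deriv ξ) s)
        - (1/2) * S.prod (x s) (deriv x s) (deriv x s)
            * S.prod (x s) (S.grad (x s)) (ξ s))) = 0

/-- The space `X_Q`. -/
def InXQ (Q : Vec N) (x : ℝ → Vec N) : Prop :=
  H1On x 0 1 ∧ S.V (x 0) = S.E ∧ (∀ s ∈ Ioc (0:ℝ) 1, S.V (x s) < S.E) ∧ x 1 = Q

/-- The Jacobi length functional `L_V`. -/
def LV (x : ℝ → Vec N) : ℝ :=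
  ∫ s in (0:ℝ)..1,
    Real.sqrt ((1/2) * (S.E - S.V (x s)) * S.prod (x s) (deriv x s) (deriv x s))

/-- The distance `d_V(Q)` from `Q` to the boundary of the potential well. -/
def dV (Q : Vec N) : ℝ := sInf {r | ∃ x, S.InXQ Q x ∧ r = S.LV x}

/-- `γ : [0,a] → M` is a `g_*`-geodesic starting at `V⁻¹(E)`, staying in the potential
well for `s > 0`, parameterized by arc length (`½ g(γ̇,γ̇)(E−V(γ)) ≡ 1`). -/
def IsBdryGeo (γ : ℝ → Vec N) (a : ℝ) : Prop :=
  0 < a ∧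
  ContinuousOn γ (Icc 0 a) ∧
  (∀ s ∈ Ioc (0:ℝ) a, ContDiffAt ℝ 2 γ s) ∧
  S.V (γ 0) = S.E ∧
  (∀ s ∈ Ioc (0:ℝ) a, S.V (γ s) < S.E) ∧
  (∀ s ∈ Ioc (0:ℝ) a, S.GeoEqAt γ (deriv γ) (deriv (deriv γ)) s) ∧
  (∀ s ∈ Ioc (0:ℝ) a, (1/2) * S.prod (γ s) (deriv γ s) (deriv γ s) * (S.E - S.V (γ s)) = 1)

/-- The index form `I_{s₁,s₂}(ξ,η)` along `γ`. -/
def idxForm (γ : ℝ → Vec N) (s₁ s₂ : ℝ) (ξ η : ℝ → Vec N) : ℝ :=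
  ∫ u in s₁..s₂,
    ((S.E - S.V (γ u)) *
        (S.prod (γ u) (S.covD γ (deriv γ) ξ (deriv ξ) u) (S.covD γ (deriv γ) η (deriv η) u)
          + S.prod (γ u) (S.curv (γ u) (deriv γ u) (ξ u) (deriv γ u)) (η u))
      - (S.prod (γ u) (S.grad (γ u)) (ξ u)
            * S.prod (γ u) (deriv γ u) (S.covD γ (deriv γ) η (deriv η) u)
          + S.prod (γ u) (deriv γ u) (S.covD γ (deriv γ) ξ (deriv ξ) u)
            * S.prod (γ u) (S.grad (γ u)) (η u)
          + (1/2) * S.prod (γ u) (S.hessV (γ u) (ξ u)) (η u)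
            * S.prod (γ u) (deriv γ u) (deriv γ u)))

/-- Membership in the space `Y_s^W`: absolutely continuous vector fields along `γ|[0,s]`
with finite weighted norm, with `ξ(0) ∈ T_{γ(0)}V⁻¹(E)` and `ξ(s) = W`. -/
def InY (γ : ℝ → Vec N) (s : ℝ) (W : Vec N) (ξ : ℝ → Vec N) : Prop :=
  ACOn ξ 0 s ∧
  IntegrableOn (fun u => (S.E - S.V (γ u)) *
      S.prod (γ u) (S.covD γ (deriv γ) ξ (deriv ξ) u)
        (S.covD γ (deriv γ) ξ (deriv ξ) u)) (Icc 0 s) ∧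
  S.prod (γ 0) (S.grad (γ 0)) (ξ 0) = 0 ∧
  ξ s = W

/-- The weighted squared norm `⟨ξ,ξ⟩_{0,s}`. -/
def wNormSq (γ : ℝ → Vec N) (s : ℝ) (ξ : ℝ → Vec N) : ℝ :=
  ∫ u in (0:ℝ)..s, (S.E - S.V (γ u)) *
    S.prod (γ u) (S.covD γ (deriv γ) ξ (deriv ξ) u) (S.covD γ (deriv γ) ξ (deriv ξ) u)

/-- The Jacobi field equation (eq. (4.9)) at the instant `u`. -/
def JacobiEqAt (γ ξ : ℝ → Vec N) (u : ℝ) : Prop :=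
  ∀ k, - deriv (fun t => (S.E - S.V (γ t)) * S.covD γ (deriv γ) ξ (deriv ξ) t k) u
      + (S.E - S.V (γ u)) * S.curv (γ u) (deriv γ u) (ξ u) (deriv γ u) k
      + deriv (fun t => S.prod (γ t) (S.grad (γ t)) (ξ t) * deriv γ t k) u
      - S.prod (γ u) (deriv γ u) (S.covD γ (deriv γ) ξ (deriv ξ) u) * S.grad (γ u) k
      - (1/2) * S.prod (γ u) (deriv γ u) (deriv γ u) * S.hessV (γ u) (ξ u) k = 0

/-- `ξ` is a Jacobi field along `γ|[0,s]`: of class `C⁰([0,s]) ∩ C²((0,s])` and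
solving the Jacobi equation on `(0,s]`. -/
def IsJacobi (γ ξ : ℝ → Vec N) (s : ℝ) : Prop :=
  ContinuousOn ξ (Icc 0 s) ∧ (∀ u ∈ Ioc (0:ℝ) s, ContDiffAt ℝ 2 ξ u) ∧
  ∀ u ∈ Ioc (0:ℝ) s, S.JacobiEqAt γ ξ u

/-- The boundary condition (eq. (4.10)): the continuous extension at `s = 0` of
`(E−V(γ))Dξ/ds − g(∇V(γ),ξ)γ̇` is parallel to `∇V(γ(0))`. -/
def BdryCond (γ ξ : ℝ → Vec N) : Prop :=
  ∃ c : ℝ, Tendsto (fun u => (fun k => (S.E - S.V (γ u)) * S.covD γ (deriv γ) ξ (deriv ξ) u k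
      - S.prod (γ u) (S.grad (γ u)) (ξ u) * deriv γ u k))
    (nhdsWithin 0 (Ioi 0)) (nhds (c • S.grad (γ 0)))

end Setting

/-- The family `ξ : Fin n → (ℝ → Vec N)` is linearly independent as fields on `I`. -/
def IndepOn {n : ℕ} (I : Set ℝ) (ξ : Fin n → ℝ → Vec N) : Prop :=
  ∀ c : Fin n → ℝ, (∀ u ∈ I, (∑ i, c i • ξ i) u = 0) → c = 0

/-- The index of the quadratic form `B` on the class `C` of vector fields (regarded as
fields on `I`) is at least `n`. -/
def IndexGe {N : ℕ} (B : (ℝ → Vec N) → ℝ) (C : (ℝ → Vec N) → Prop) (I : Set ℝ) (n : ℕ) : Prop :=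
  ∃ ξ : Fin n → ℝ → Vec N, (∀ i, C (ξ i)) ∧ IndepOn I ξ ∧
    ∀ c : Fin n → ℝ, c ≠ 0 → B (∑ i, c i • ξ i) < 0

/-- The index of the quadratic form `B` on the class `C` equals `n`. -/
def IndexEq {N : ℕ} (B : (ℝ → Vec N) → ℝ) (C : (ℝ → Vec N) → Prop) (I : Set ℝ) (n : ℕ) : Prop :=
  IndexGe B C I n ∧ ¬ IndexGe B C I (n+1)

/-- The nullity of a bilinear form `B` on the class `C` is at least `n`. -/
def NullGe {N : ℕ} (B : (ℝ → Vec N) → (ℝ → Vec N) → ℝ) (C : (ℝ → Vec N) → Prop)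
    (I : Set ℝ) (n : ℕ) : Prop :=
  ∃ ξ : Fin n → ℝ → Vec N, (∀ i, C (ξ i)) ∧ IndepOn I ξ ∧
    ∀ i, ∀ η, C η → B (ξ i) η = 0

/-- The nullity of a bilinear form `B` on the class `C` equals `n`. -/
def NullEq {N : ℕ} (B : (ℝ → Vec N) → (ℝ → Vec N) → ℝ) (C : (ℝ → Vec N) → Prop)
    (I : Set ℝ) (n : ℕ) : Prop :=
  NullGe B C I n ∧ ¬ NullGe B C I (n+1)

namespace Setting

variable (S : Setting N)

/-- `ξ` is a (nontrivial candidate) field realizing conjugacy at `γ(s)`: a Jacobi field in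
`Y_s` satisfying the boundary condition (4.10). -/
def ConjField (γ : ℝ → Vec N) (s : ℝ) (ξ : ℝ → Vec N) : Prop :=
  S.InY γ s 0 ξ ∧ S.IsJacobi γ ξ s ∧ S.BdryCond γ ξ

/-- `γ(s)` is conjugate to `V⁻¹(E)` with multiplicity at least `n`. -/
def MultGe (γ : ℝ → Vec N) (s : ℝ) (n : ℕ) : Prop :=
  ∃ ξ : Fin n → ℝ → Vec N, (∀ i, S.ConjField γ s (ξ i)) ∧ IndepOn (Icc 0 s) ξ

/-- `γ(s)` is conjugate to `V⁻¹(E)`. -/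
def IsConj (γ : ℝ → Vec N) (s : ℝ) : Prop := S.MultGe γ s 1

/-- `γ(s)` is conjugate to `V⁻¹(E)` with multiplicity exactly `n`. -/
def Mult (γ : ℝ → Vec N) (s : ℝ) (n : ℕ) : Prop :=
  S.MultGe γ s n ∧ ¬ S.MultGe γ s (n+1)

end Setting

/-- A nonconstant `C²` Jacobi-metric geodesic on `[a,s₀]`, with constant
`½(E−V(x))g(ẋ,ẋ) ≡ cx > 0`, staying in the well for `s < s₀` and reaching the
boundary `V⁻¹(E)` at `s₀`. -/
def ReachesBdry {N : ℕ} (S : Setting N) (a s₀ : ℝ) (x x' x'' : ℝ → Vec N) (cx : ℝ) : Prop :=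
  ContinuousOn x (Icc a s₀) ∧
  (∀ s ∈ Ioo a s₀, HasDerivAt x (x' s) s) ∧
  (∀ s ∈ Ioo a s₀, HasDerivAt x' (x'' s) s) ∧
  ContinuousOn x'' (Ioo a s₀) ∧
  (∃ s ∈ Icc a s₀, ∃ t ∈ Icc a s₀, x s ≠ x t) ∧
  (∀ s ∈ Ioo a s₀, S.GeoEqAt x x' x'' s) ∧
  0 < cx ∧
  (∀ s ∈ Ioo a s₀, (1/2) * (S.E - S.V (x s)) * S.prod (x s) (x' s) (x' s) = cx) ∧
  (∀ s ∈ Ico a s₀, S.V (x s) < S.E) ∧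
  S.V (x s₀) = S.E

/-!
Along a geodesic `x` put `f = E - V ∘ x`. Contracting the geodesic equation with `dV` and
inserting the energy identity `½ f g(ẋ, ẋ) = c` gives

  `(f f')' = c g(∇V, ∇V) / f - f Hess V(ẋ, ẋ)`,

while `dV(ẋ)² ≲ g(ẋ, ẋ)` gives `f f'² ≲ c`. As `∇V ≠ 0` on `V⁻¹(E)`, compactness of the sublevel
yields `(f f')' ≥ c (ρ / f - D)` with `ρ > 0`, where all the constants depend on `(M, g, V, E)`
only.

Near `s₀` the term `D` is absorbed and `(f f')' ≥ cρ / (2 f)`. Hence `f f'` increases to `0`, so it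
is negative there; then `(f f')² - cρ f` decreases to `0`, so that `√f f' ≤ -√(cρ)`. Thus
`(f^{3/2})' = 3/2 √f f'` lies between two negative constants, and integration from `s₀` gives the
`2/3` power law. Integrating `(f f')' ≥ c (ρ / f - D)` over the whole interval instead bounds
`∫ √c / f`, because `(f f')² = f · f f'²` is bounded by a multiple of `c`.
-/

section Real

lemma rpow_mem_Icc_of_rpow_mul_deriv_mem_Icc {f f' : ℝ → ℝ} {b s₀ p m M : ℝ} (hp : 0 < p)
    (hf : ContinuousOn f (Icc b s₀)) (hpos : ∀ s ∈ Ioo b s₀, 0 < f s) (h0 : f s₀ = 0)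
    (hf' : ∀ s ∈ Ioo b s₀, HasDerivAt f (f' s) s)
    (hbd : ∀ s ∈ Ioo b s₀, f s ^ (p - 1) * f' s ∈ Icc (-M) (-m)) :
    ∀ s ∈ Icc b s₀, f s ^ p ∈ Icc (p * m * (s₀ - s)) (p * M * (s₀ - s)) := by
  intro s hs
  have hderiv : ∀ t ∈ interior (Icc b s₀),
      HasDerivAt (fun t => f t ^ p) (p * (f t ^ (p - 1) * f' t)) t := fun t ht => by
    rw [interior_Icc] at ht
    exact ((hf' t ht).rpow_const (Or.inl (hpos t ht).ne')).congr_deriv (by ring)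
  have hcont : ContinuousOn (fun t => f t ^ p) (Icc b s₀) :=
    hf.rpow_const fun _ _ => Or.inr hp.le
  have hdiff : DifferentiableOn ℝ (fun t => f t ^ p) (interior (Icc b s₀)) :=
    fun t ht => (hderiv t ht).differentiableAt.differentiableWithinAt
  have hderiv_mem : ∀ t ∈ interior (Icc b s₀),
      deriv (fun t => f t ^ p) t ∈ Icc (p * -M) (p * -m) := fun t ht => by
    rw [(hderiv t ht).deriv]
    rw [interior_Icc] at ht
    exact ⟨mul_le_mul_of_nonneg_left (hbd t ht).1 hp.le,
      mul_le_mul_of_nonneg_left (hbd t ht).2 hp.le⟩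
  have hs₀ : s₀ ∈ Icc b s₀ := right_mem_Icc.2 (hs.1.trans hs.2)
  have hupper := (convex_Icc b s₀).image_sub_le_mul_sub_of_deriv_le hcont hdiff
    (fun t ht => (hderiv_mem t ht).2) s hs s₀ hs₀ hs.2
  have hlower := (convex_Icc b s₀).mul_sub_le_image_sub_of_le_deriv hcont hdiff
    (fun t ht => (hderiv_mem t ht).1) s hs s₀ hs₀ hs.2
  rw [h0, Real.zero_rpow hp.ne'] at hupper hlower
  constructor <;> linarith

lemma mem_Icc_mul_rpow_inv_of_rpow_mem_Icc {y r p α β : ℝ} (hp : 0 < p) (hy : 0 ≤ y) (hr : 0 ≤ r)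
    (hα : 0 ≤ α) (hβ : 0 ≤ β) (h : y ^ p ∈ Icc (α * r) (β * r)) :
    y ∈ Icc (α ^ p⁻¹ * r ^ p⁻¹) (β ^ p⁻¹ * r ^ p⁻¹) := by
  rw [← Real.mul_rpow hα hr, ← Real.mul_rpow hβ hr]
  exact ⟨(Real.rpow_inv_le_iff_of_pos (mul_nonneg hα hr) hy hp).2 h.1,
    (Real.le_rpow_inv_iff_of_pos hy (mul_nonneg hβ hr) hp).2 h.2⟩

lemma tendsto_mul_zero_of_mul_sq_le {α : Type*} {l : Filter α} {f g : α → ℝ} {B : ℝ}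
    (hf : Tendsto f l (𝓝 0)) (hpos : ∀ᶠ x in l, 0 ≤ f x) (hB : ∀ᶠ x in l, f x * g x ^ 2 ≤ B) :
    Tendsto (fun x => f x * g x) l (𝓝 0) := by
  have hlim : Tendsto (fun x => √(f x * B)) l (𝓝 0) := by
    simpa using (hf.mul_const B).sqrt
  refine squeeze_zero_norm' ?_ hlim
  filter_upwards [hpos, hB] with x hx hxB
  refine Real.abs_le_sqrt ?_
  calc (f x * g x) ^ 2 = f x * (f x * g x ^ 2) := by ring
    _ ≤ f x * B := mul_le_mul_of_nonneg_left hxB hx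

section Order

variable {α β : Type*} [TopologicalSpace α] [LinearOrder α] [OrderTopology α] [DenselyOrdered α]
  [TopologicalSpace β] [Preorder β] [OrderClosedTopology β] {f : α → β} {a b : α} {L : β}

lemma le_of_monotoneOn_Ioo_of_tendsto (hf : MonotoneOn f (Ioo a b))
    (hL : Tendsto f (𝓝[<] b) (𝓝 L)) : ∀ s ∈ Ioo a b, f s ≤ L := fun s hs => by
  have : (𝓝[<] b).NeBot := nhdsLT_neBot_of_exists_lt ⟨a, hs.1.trans hs.2⟩
  refine ge_of_tendsto hL ?_
  filter_upwards [Ioo_mem_nhdsLT hs.2] with t ht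
  exact hf hs ⟨hs.1.trans ht.1, ht.2⟩ ht.1.le

lemma le_of_antitoneOn_Ioo_of_tendsto (hf : AntitoneOn f (Ioo a b))
    (hL : Tendsto f (𝓝[<] b) (𝓝 L)) : ∀ s ∈ Ioo a b, L ≤ f s :=
  le_of_monotoneOn_Ioo_of_tendsto (β := βᵒᵈ) hf.dual_right hL

end Order

lemma sqrt_mul_deriv_le_neg_sqrt {f f' w' : ℝ → ℝ} {b s₀ k : ℝ} (hk : 0 ≤ k)
    (hpos : ∀ s ∈ Ioo b s₀, 0 < f s) (hlim : Tendsto f (𝓝[<] s₀) (𝓝 0))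
    (hwlim : Tendsto (fun s => f s * f' s) (𝓝[<] s₀) (𝓝 0))
    (hf' : ∀ s ∈ Ioo b s₀, HasDerivAt f (f' s) s)
    (hw' : ∀ s ∈ Ioo b s₀, HasDerivAt (fun s => f s * f' s) (w' s) s)
    (hle : ∀ s ∈ Ioo b s₀, k / f s ≤ w' s) :
    ∀ s ∈ Ioo b s₀, √(f s) * f' s ≤ -√(2 * k) := by
  have hmono : MonotoneOn (fun s => f s * f' s) (Ioo b s₀) := by
    refine monotoneOn_of_hasDerivWithinAt_nonneg (f' := w') (convex_Ioo _ _)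
      (fun s hs => (hw' s hs).continuousAt.continuousWithinAt) ?_ ?_ <;> rw [interior_Ioo]
    · exact fun s hs => (hw' s hs).hasDerivWithinAt
    · exact fun s hs => (div_nonneg hk (hpos s hs).le).trans (hle s hs)
  have hnonpos := le_of_monotoneOn_Ioo_of_tendsto hmono hwlim
  have hderiv : ∀ s ∈ Ioo b s₀, HasDerivAt (fun s => (f s * f' s) ^ 2 - 2 * k * f s)
      (2 * (f s * f' s) * (w' s - k / f s)) s := fun s hs => by
    refine (((hw' s hs).pow 2).sub ((hf' s hs).const_mul (2 * k))).congr_deriv ?_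
    have := (hpos s hs).ne'
    push_cast
    field_simp
  have hanti : AntitoneOn (fun s => (f s * f' s) ^ 2 - 2 * k * f s) (Ioo b s₀) := by
    refine antitoneOn_of_hasDerivWithinAt_nonpos (convex_Ioo _ _)
      (f' := fun s => 2 * (f s * f' s) * (w' s - k / f s))
      (fun s hs => (hderiv s hs).continuousAt.continuousWithinAt) ?_ ?_ <;> rw [interior_Ioo]
    · exact fun s hs => (hderiv s hs).hasDerivWithinAt
    · exact fun s hs => mul_nonpos_of_nonpos_of_nonneg (by linarith [hnonpos s hs])
        (sub_nonneg.2 (hle s hs))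
  have hnonneg : ∀ s ∈ Ioo b s₀, 0 ≤ (f s * f' s) ^ 2 - 2 * k * f s :=
    le_of_antitoneOn_Ioo_of_tendsto hanti <| by
      simpa using (hwlim.pow 2).sub (hlim.const_mul (2 * k))
  intro s hs
  have hfs := hpos s hs
  have hf's : f' s ≤ 0 := nonpos_of_mul_nonpos_right (hnonpos s hs) hfs
  refine le_neg_of_le_neg (Real.sqrt_le_iff.2 ⟨?_, ?_⟩)
  · exact neg_nonneg.2 (mul_nonpos_of_nonneg_of_nonpos (Real.sqrt_nonneg _) hf's)
  · rw [neg_sq, mul_pow, Real.sq_sqrt hfs.le]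
    exact le_of_mul_le_mul_left (by linarith [hnonneg s hs]) hfs

lemma integral_le_two_mul_of_abs_le {u u' φ : ℝ → ℝ} {a b M : ℝ} (hab : a < b)
    (hφ : IntegrableOn φ (Icc a b)) (hu : ContinuousOn u (Ioc a b))
    (hu' : ∀ t ∈ Ioo a b, HasDerivAt u (u' t) t) (hM : ∀ t ∈ Ioc a b, |u t| ≤ M)
    (hle : ∀ t ∈ Ioo a b, φ t ≤ u' t) : ∫ t in a..b, φ t ≤ 2 * M := by
  have hright : ∀ t ∈ Ioc a b, ∫ τ in t..b, φ τ ≤ 2 * M := fun t ht => by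
    have hsub : Ioo t b ⊆ Ioo a b := Ioo_subset_Ioo_left ht.1.le
    have := intervalIntegral.integral_le_sub_of_hasDeriv_right_of_le ht.2
      (hu.mono fun τ hτ => ⟨ht.1.trans_le hτ.1, hτ.2⟩)
      (fun τ hτ => (hu' τ (hsub hτ)).hasDerivWithinAt) (hφ.mono_set (Icc_subset_Icc_left ht.1.le))
      fun τ hτ => hle τ (hsub hτ)
    linarith [abs_le.1 (hM t ht), abs_le.1 (hM b ⟨hab, le_rfl⟩)]
  have hcont : ContinuousOn (fun t => ∫ τ in t..b, φ τ) (Icc a b) := by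
    rw [← uIcc_of_le hab.le] at hφ ⊢
    exact intervalIntegral.continuousOn_primitive_interval_left hφ
  have hlim : Tendsto (fun t => ∫ τ in t..b, φ τ) (𝓝[>] a) (𝓝 (∫ τ in a..b, φ τ)) := by
    rw [← nhdsWithin_Ioc_eq_nhdsGT hab]
    exact (hcont a (left_mem_Icc.2 hab.le)).mono Ioc_subset_Icc_self
  exact le_of_tendsto hlim (mem_of_superset (Ioc_mem_nhdsGT hab) hright)

end Real

/-- The properties of `f = E - V ∘ x`, for a boundary-reaching geodesic `x : [a, s₀] → M` of energy
constant `c`, from which the asymptotics at `s₀` are derived. The functions `f'` and `w'` are the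
derivatives of `f` and of `f f'`; the constants `A`, `D` and `ρ` come from the potential well alone,
which makes the resulting estimates uniform in the geodesic. -/
structure IsEnergyProfile (A D ρ c a s₀ : ℝ) (f f' w' : ℝ → ℝ) : Prop where
  continuousOn : ContinuousOn f (Icc a s₀)
  pos : ∀ s ∈ Ico a s₀, 0 < f s
  hasDerivAt : ∀ s ∈ Ioo a s₀, HasDerivAt f (f' s) s
  hasDerivAt_mul : ∀ s ∈ Ioo a s₀, HasDerivAt (fun t => f t * f' t) (w' s) s
  mul_sq_le : ∀ s ∈ Ioo a s₀, f s * f' s ^ 2 ≤ A * c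
  le_deriv_mul : ∀ s ∈ Ioo a s₀, c * (ρ / f s - D) ≤ w' s

namespace IsEnergyProfile

variable {A D ρ c a s₀ : ℝ} {f f' w' : ℝ → ℝ}

lemma tendsto (h : IsEnergyProfile A D ρ c a s₀ f f' w') (ha : a < s₀) (h0 : f s₀ = 0) :
    Tendsto f (𝓝[<] s₀) (𝓝 0) := by
  rw [← nhdsWithin_Ico_eq_nhdsLT ha, ← h0]
  exact (h.continuousOn s₀ (right_mem_Icc.2 ha.le)).mono Ico_subset_Icc_self

lemma exists_sqrt_mul_deriv_le (h : IsEnergyProfile A D ρ c a s₀ f f' w') (ha : a < s₀)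
    (hc : 0 < c) (hρ : 0 < ρ) (h0 : f s₀ = 0) :
    ∃ b ∈ Ico a s₀, ∀ s ∈ Ioo b s₀, √(f s) * f' s ≤ -√(c * ρ) := by
  have hlim := h.tendsto ha h0
  have hIoo : ∀ᶠ s in 𝓝[<] s₀, s ∈ Ioo a s₀ := Ioo_mem_nhdsLT ha
  have hwlim : Tendsto (fun s => f s * f' s) (𝓝[<] s₀) (𝓝 0) :=
    tendsto_mul_zero_of_mul_sq_le hlim (hIoo.mono fun s hs => (h.pos s ⟨hs.1.le, hs.2⟩).le)
      (hIoo.mono h.mul_sq_le)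
  have hsmall : ∀ᶠ s in 𝓝[<] s₀, D * f s < ρ / 2 :=
    (hlim.const_mul D).eventually_lt_const (by simpa using half_pos hρ)
  obtain ⟨b, hb, hbs₀⟩ := ((TFAE_mem_nhdsLT ha _).out 0 3).1 hsmall
  have hsub : ∀ s ∈ Ioo b s₀, s ∈ Ioo a s₀ := Ioo_subset_Ioo_left hb.1
  have hpos : ∀ s ∈ Ioo b s₀, 0 < f s := fun s hs => h.pos s ⟨(hsub s hs).1.le, hs.2⟩
  have hle : ∀ s ∈ Ioo b s₀, c * ρ / 2 / f s ≤ w' s := fun s hs => by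
    have hfs := hpos s hs
    refine le_trans ?_ (h.le_deriv_mul s (hsub s hs))
    calc c * ρ / 2 / f s = c * (ρ / f s - ρ / 2 / f s) := by field_simp; ring
      _ ≤ c * (ρ / f s - D) := by
        gcongr
        exact (le_div_iff₀ hfs).2 (hbs₀ hs).le
  refine ⟨b, hb, fun s hs => ?_⟩
  simpa [mul_div_cancel₀] using sqrt_mul_deriv_le_neg_sqrt (by positivity) hpos hlim hwlim
    (fun s hs => h.hasDerivAt s (hsub s hs)) (fun s hs => h.hasDerivAt_mul s (hsub s hs)) hle s hs

lemma neg_sqrt_le_sqrt_mul_deriv (h : IsEnergyProfile A D ρ c a s₀ f f' w') :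
    ∀ s ∈ Ioo a s₀, -√(A * c) ≤ √(f s) * f' s := fun s hs => by
  refine neg_le_of_abs_le (Real.abs_le_sqrt ?_)
  rw [mul_pow, Real.sq_sqrt (h.pos s ⟨hs.1.le, hs.2⟩).le]
  exact h.mul_sq_le s hs

theorem exists_rpow_bounds (h : IsEnergyProfile A D ρ c a s₀ f f' w') (ha : a < s₀)
    (hc : 0 < c) (hρ : 0 < ρ) (h0 : f s₀ = 0) :
    ∃ c₁ c₂ : ℝ, 0 < c₁ ∧ c₁ ≤ c₂ ∧ ∃ δ > (0 : ℝ), ∀ s ∈ Ico (s₀ - δ) s₀,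
      f s ∈ Icc (c₁ * (s₀ - s) ^ ((2 : ℝ) / 3)) (c₂ * (s₀ - s) ^ ((2 : ℝ) / 3)) := by
  obtain ⟨b, hb, hneg⟩ := h.exists_sqrt_mul_deriv_le ha hc hρ h0
  have hpos : ∀ s ∈ Ico b s₀, 0 < f s := fun s hs => h.pos s ⟨hb.1.trans hs.1, hs.2⟩
  have hsub : Ioo b s₀ ⊆ Ioo a s₀ := Ioo_subset_Ioo_left hb.1
  have hderiv : ∀ s ∈ Ioo b s₀,
      f s ^ ((3 / 2 : ℝ) - 1) * f' s ∈ Icc (-√(A * c)) (-√(c * ρ)) := fun s hs => by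
    rw [show (3 / 2 : ℝ) - 1 = 1 / 2 by norm_num, ← Real.sqrt_eq_rpow]
    exact ⟨h.neg_sqrt_le_sqrt_mul_deriv s (hsub hs), hneg s hs⟩
  have hbounds : ∀ s ∈ Ico b s₀,
      f s ∈ Icc ((3 / 2 * √(c * ρ)) ^ ((2 : ℝ) / 3) * (s₀ - s) ^ ((2 : ℝ) / 3))
        ((3 / 2 * √(A * c)) ^ ((2 : ℝ) / 3) * (s₀ - s) ^ ((2 : ℝ) / 3)) := fun s hs => by
    rw [show (2 : ℝ) / 3 = (3 / 2)⁻¹ by norm_num]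
    exact mem_Icc_mul_rpow_inv_of_rpow_mem_Icc (by norm_num) (hpos s hs).le
      (sub_nonneg.2 hs.2.le) (by positivity) (by positivity)
      (rpow_mem_Icc_of_rpow_mul_deriv_mem_Icc (by norm_num)
        (h.continuousOn.mono (Icc_subset_Icc_left hb.1)) (fun t ht => hpos t ⟨ht.1.le, ht.2⟩) h0
        (fun t ht => h.hasDerivAt t (hsub ht)) hderiv s ⟨hs.1, hs.2.le⟩)
  have hδ : 0 < s₀ - b := sub_pos.2 hb.2
  refine ⟨(3 / 2 * √(c * ρ)) ^ ((2 : ℝ) / 3), (3 / 2 * √(A * c)) ^ ((2 : ℝ) / 3), by positivity, ?_,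
    s₀ - b, hδ, fun s hs => hbounds s (by rwa [sub_sub_cancel] at hs)⟩
  have hatb := hbounds b ⟨le_rfl, hb.2⟩
  exact le_of_mul_le_mul_right (hatb.1.trans hatb.2) (Real.rpow_pos_of_pos hδ _)

lemma abs_mul_div_sqrt_le {F : ℝ} (h : IsEnergyProfile A D ρ c a s₀ f f' w') (hc : 0 < c)
    (hF : ∀ s ∈ Ico a s₀, f s ≤ F) : ∀ s ∈ Ioo a s₀, |f s * f' s / √c| ≤ √(F * A) := by
  intro s hs
  have hs' : s ∈ Ico a s₀ := ⟨hs.1.le, hs.2⟩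
  have hfs := h.pos s hs'
  have hA : f s * f' s ^ 2 / c ≤ A := (div_le_iff₀ hc).2 (h.mul_sq_le s hs)
  refine Real.abs_le_sqrt ?_
  calc (f s * f' s / √c) ^ 2 = f s * (f s * f' s ^ 2 / c) := by
        rw [div_pow, Real.sq_sqrt hc.le]; ring
    _ ≤ F * A := mul_le_mul (hF s hs') hA (by positivity) (hfs.le.trans (hF s hs'))

theorem integral_sqrt_div_le {F : ℝ} (h : IsEnergyProfile A D ρ c a s₀ f f' w') (hc : 0 < c)
    (hρ : 0 < ρ) (hD : 0 ≤ D) (hF : ∀ s ∈ Ico a s₀, f s ≤ F) :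
    ∀ s ∈ Ico a s₀, ∫ τ in a..s, √c / f τ ≤ (2 * √(F * A) + √c * D * (s₀ - a)) / ρ := by
  intro s hs
  rcases hs.1.eq_or_lt with rfl | has
  · have : 0 ≤ s₀ - a := sub_nonneg.2 hs.2.le
    rw [intervalIntegral.integral_same]
    positivity
  have hsub : Ioc a s ⊆ Ioo a s₀ := Ioc_subset_Ioo_right hs.2
  have hcont : ContinuousOn (fun τ => √c / f τ) (Icc a s) :=
    continuousOn_const.div (h.continuousOn.mono (Icc_subset_Icc_right hs.2.le))
      fun t ht => (h.pos t ⟨ht.1, ht.2.trans_lt hs.2⟩).ne'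
  have hφ : ContinuousOn (fun τ => ρ * (√c / f τ) - √c * D) (Icc a s) :=
    (continuousOn_const.mul hcont).sub continuousOn_const
  have hint : ∫ τ in a..s, (ρ * (√c / f τ) - √c * D) ≤ 2 * √(F * A) := by
    refine integral_le_two_mul_of_abs_le has hφ.integrableOn_Icc
      (u := fun t => f t * f' t / √c) (u' := fun t => w' t / √c)
      (fun t ht => ((h.hasDerivAt_mul t (hsub ht)).div_const _).continuousAt.continuousWithinAt)
      (fun t ht => (h.hasDerivAt_mul t (hsub (Ioo_subset_Ioc_self ht))).div_const _)
      (fun t ht => h.abs_mul_div_sqrt_le hc hF t (hsub ht)) fun t ht => ?_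
    rw [le_div_iff₀ (Real.sqrt_pos.2 hc)]
    calc (ρ * (√c / f t) - √c * D) * √c = √c * √c * (ρ / f t - D) := by ring
      _ = c * (ρ / f t - D) := by rw [Real.mul_self_sqrt hc.le]
      _ ≤ w' t := h.le_deriv_mul t (hsub (Ioo_subset_Ioc_self ht))
  rw [intervalIntegral.integral_sub
      ((hcont.intervalIntegrable_of_Icc has.le).const_mul ρ) intervalIntegrable_const,
    intervalIntegral.integral_const_mul, intervalIntegral.integral_const, smul_eq_mul] at hint
  have hlen : (s - a) * (√c * D) ≤ √c * D * (s₀ - a) := by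
    rw [mul_comm]
    gcongr
    exact hs.2.le
  rw [le_div_iff₀ hρ]
  linarith

end IsEnergyProfile

lemma exists_le_mul_of_isCompact_of_homogeneous {X E : Type*} [TopologicalSpace X]
    [NormedAddCommGroup E] [NormedSpace ℝ E] [ProperSpace E] {K : Set X} (hK : IsCompact K)
    {F Q : X → E → ℝ} {n : ℕ} (hn : n ≠ 0)
    (hF : ContinuousOn (Function.uncurry F) (K ×ˢ univ))
    (hQ : ContinuousOn (Function.uncurry Q) (K ×ˢ univ))
    (hF_smul : ∀ x ∈ K, ∀ (t : ℝ) v, F x (t • v) = t ^ n * F x v)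
    (hQ_smul : ∀ x ∈ K, ∀ (t : ℝ) v, Q x (t • v) = t ^ n * Q x v)
    (hQ_pos : ∀ x ∈ K, ∀ v ≠ 0, 0 < Q x v) :
    ∃ C, 0 ≤ C ∧ ∀ x ∈ K, ∀ v, F x v ≤ C * Q x v := by
  have hsub : K ×ˢ Metric.sphere (0 : E) 1 ⊆ K ×ˢ univ := prod_mono_right (subset_univ _)
  have hpos : ∀ p ∈ K ×ˢ Metric.sphere (0 : E) 1, 0 < Function.uncurry Q p := fun p hp =>
    hQ_pos _ hp.1 _ (ne_zero_of_mem_unit_sphere ⟨p.2, hp.2⟩)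
  obtain ⟨C, hC⟩ := (hK.prod (isCompact_sphere (0 : E) 1)).exists_bound_of_continuousOn
    ((hF.mono hsub).div (hQ.mono hsub) fun p hp => (hpos p hp).ne')
  have hsphere : ∀ x ∈ K, ∀ v ∈ Metric.sphere (0 : E) 1, F x v ≤ |C| * Q x v := fun x hx v hv =>
    (div_le_iff₀ (hpos (x, v) ⟨hx, hv⟩)).1
      ((le_abs_self _).trans ((hC (x, v) ⟨hx, hv⟩).trans (le_abs_self C)))
  refine ⟨|C|, abs_nonneg C, fun x hx v => ?_⟩
  rcases eq_or_ne v 0 with rfl | hv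
  · have hF0 : F x 0 = 0 := by simpa [hn] using hF_smul x hx 0 0
    have hQ0 : Q x 0 = 0 := by simpa [hn] using hQ_smul x hx 0 0
    rw [hF0, hQ0, mul_zero]
  · have hsmul : ‖v‖ • ‖v‖⁻¹ • v = v := smul_inv_smul₀ (norm_ne_zero_iff.2 hv) v
    calc F x v = ‖v‖ ^ n * F x (‖v‖⁻¹ • v) := by rw [← hF_smul x hx, hsmul]
      _ ≤ ‖v‖ ^ n * (|C| * Q x (‖v‖⁻¹ • v)) := by
        gcongr
        exact hsphere x hx _ (by simp [norm_smul, hv])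
      _ = |C| * Q x v := by rw [mul_left_comm, ← hQ_smul x hx, hsmul]

namespace Setting

section Metric

variable (S : Setting N)

lemma prod_eq_dotProduct_mulVec (x v w : Vec N) : S.prod x v w = v ⬝ᵥ (S.g x *ᵥ w) := by
  simp only [prod, gP, dotProduct, mulVec, Finset.mul_sum]
  exact Finset.sum_congr rfl fun i _ => Finset.sum_congr rfl fun j _ => by ring

lemma prod_smul_smul (x : Vec N) (t : ℝ) (v : Vec N) :
    S.prod x (t • v) (t • v) = t ^ 2 * S.prod x v v := by
  simp only [prod_eq_dotProduct_mulVec, mulVec_smul, smul_dotProduct, dotProduct_smul, smul_eq_mul]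
  ring

variable {S} in
lemma posDef_g {x : Vec N} (hx : x ∈ S.U) : (S.g x).PosDef :=
  .of_dotProduct_mulVec_pos (Matrix.IsHermitian.ext fun i j => S.hgsymm x hx j i) fun v hv => by
    rw [star_trivial, ← prod_eq_dotProduct_mulVec]
    exact S.hgpos x hx v hv

lemma g_mulVec_grad {x : Vec N} (hx : x ∈ S.U) : S.g x *ᵥ S.grad x = euclGrad S.V x := by
  rw [grad, mulVec_mulVec, mul_nonsing_inv _ (posDef_g hx).det_pos.ne'.isUnit, one_mulVec]

lemma fderiv_V_apply (x v : Vec N) : fderiv ℝ S.V x v = euclGrad S.V x ⬝ᵥ v := by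
  conv_lhs => rw [pi_eq_sum_univ' v]
  simp [euclGrad, dotProduct, mul_comm]

lemma prod_grad_left {x : Vec N} (hx : x ∈ S.U) (v : Vec N) :
    S.prod x (S.grad x) v = fderiv ℝ S.V x v := by
  rw [fderiv_V_apply, ← S.g_mulVec_grad hx, prod_eq_dotProduct_mulVec, dotProduct_mulVec,
    ← mulVec_transpose, ← conjTranspose_eq_transpose_of_trivial, (posDef_g hx).isHermitian.eq]

lemma prod_grad_grad_pos {x : Vec N} (hx : x ∈ S.U) (h : euclGrad S.V x ≠ 0) :
    0 < S.prod x (S.grad x) (S.grad x) :=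
  S.hgpos x hx _ fun h0 => h (by rw [← S.g_mulVec_grad hx, h0, mulVec_zero])

lemma prod_self_nonneg {x : Vec N} (hx : x ∈ S.U) (v : Vec N) : 0 ≤ S.prod x v v := by
  simpa [prod_eq_dotProduct_mulVec] using (posDef_g hx).posSemidef.dotProduct_mulVec_nonneg v

end Metric

section Continuity

variable (S : Setting N)

lemma continuousOn_inv_apply (i j : Fin N) : ContinuousOn (fun x => (S.g x)⁻¹ i j) S.U := by
  intro x hx
  have hg : ContinuousWithinAt S.g S.U x :=
    (continuousOn_pi.2 fun i => continuousOn_pi.2 fun j => (S.hgC i j).continuousOn) x hx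
  have hinv : ContinuousAt (fun B : Matrix (Fin N) (Fin N) ℝ => B⁻¹) (S.g x) := by
    refine continuousAt_matrix_inv _ ?_
    rw [Ring.inverse_eq_inv']
    exact continuousAt_inv₀ (posDef_g hx).det_pos.ne'
  exact (continuous_apply_apply i j).continuousAt.comp_continuousWithinAt
    (hinv.comp_continuousWithinAt hg)

lemma continuousOn_christoffel (k i j : Fin N) :
    ContinuousOn (fun x => S.christoffel x k i j) S.U := by
  have hdg : ∀ (i j : Fin N) (v : Vec N),
      ContinuousOn (fun x => fderiv ℝ (fun y => S.g y i j) x v) S.U := fun i j v =>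
    ((S.hgC i j).continuousOn_fderiv_of_isOpen S.hU (by norm_num)).clm_apply continuousOn_const
  exact continuousOn_const.mul (continuousOn_finsetSum _ fun l _ =>
    (S.continuousOn_inv_apply k l).mul (((hdg _ _ _).add (hdg _ _ _)).sub (hdg _ _ _)))

lemma contDiffOn_fderiv_V : ContDiffOn ℝ 1 (fderiv ℝ S.V) S.U :=
  S.hVC.fderiv_of_isOpen S.hU (by norm_num)

lemma continuousOn_euclGrad : ContinuousOn (euclGrad S.V) S.U :=
  continuousOn_pi.2 fun _ => S.contDiffOn_fderiv_V.continuousOn.clm_apply continuousOn_const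

lemma continuousOn_grad : ContinuousOn S.grad S.U := by
  refine continuousOn_pi.2 fun i => ?_
  simp only [grad, mulVec, dotProduct]
  exact continuousOn_finsetSum _ fun j _ =>
    (S.continuousOn_inv_apply i j).mul (continuousOn_pi.1 S.continuousOn_euclGrad j)

lemma continuousOn_prod_self :
    ContinuousOn (fun p : Vec N × Vec N => S.prod p.1 p.2 p.2) (S.U ×ˢ univ) := by
  simp only [prod, gP]
  exact continuousOn_finsetSum _ fun i _ => continuousOn_finsetSum _ fun j _ =>
    (((S.hgC i j).continuousOn.comp continuousOn_fst fun _ hp => hp.1).mul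
      (by fun_prop)).mul (by fun_prop)

end Continuity

section Hessian

variable (S : Setting N)

/-- The quadratic form `v ↦ (∇dV)(v, v)` of the Riemannian Hessian of `V`, expressed through `dV`
and the Christoffel symbols so that its continuity needs no derivative of `g⁻¹`, unlike `hessV`. -/
def hessQuad (x v : Vec N) : ℝ :=
  fderiv ℝ (fderiv ℝ S.V) x v v
    - ∑ k, euclGrad S.V x k * ∑ i, ∑ j, S.christoffel x k i j * v i * v j

lemma hessQuad_smul (x : Vec N) (t : ℝ) (v : Vec N) :
    S.hessQuad x (t • v) = t ^ 2 * S.hessQuad x v := by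
  simp only [hessQuad, map_smul, _root_.smul_apply, Pi.smul_apply, smul_eq_mul,
    mul_sub, Finset.mul_sum]
  congr 1
  · ring
  · exact Finset.sum_congr rfl fun k _ => Finset.sum_congr rfl fun i _ =>
      Finset.sum_congr rfl fun j _ => by ring

lemma continuousOn_hessQuad :
    ContinuousOn (fun p : Vec N × Vec N => S.hessQuad p.1 p.2) (S.U ×ˢ univ) := by
  have hfst : MapsTo Prod.fst (S.U ×ˢ (univ : Set (Vec N))) S.U := fun _ hp => hp.1
  refine ContinuousOn.sub ?_ (continuousOn_finsetSum _ fun k _ => ?_)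
  · exact (((S.contDiffOn_fderiv_V.continuousOn_fderiv_of_isOpen S.hU le_rfl).comp
      continuousOn_fst hfst).clm_apply continuousOn_snd).clm_apply continuousOn_snd
  · refine ((continuousOn_pi.1 S.continuousOn_euclGrad k).comp continuousOn_fst hfst).mul ?_
    exact continuousOn_finsetSum _ fun i _ => continuousOn_finsetSum _ fun j _ =>
      (((S.continuousOn_christoffel k i j).comp continuousOn_fst hfst).mul
        (by fun_prop)).mul (by fun_prop)

end Hessian

section Bounds

variable (S : Setting N)

lemma exists_le_mul_prod {F : Vec N → Vec N → ℝ}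
    (hF : ContinuousOn (Function.uncurry F) (S.U ×ˢ univ))
    (hF_smul : ∀ x (t : ℝ) v, F x (t • v) = t ^ 2 * F x v) :
    ∃ C, 0 ≤ C ∧ ∀ x, S.V x ≤ S.E → ∀ v, F x v ≤ C * S.prod x v v :=
  have hsub := prod_mono_left (t := univ) S.hsub
  exists_le_mul_of_isCompact_of_homogeneous S.hcomp two_ne_zero (hF.mono hsub)
    (S.continuousOn_prod_self.mono hsub) (fun x _ => hF_smul x) (fun x _ => S.prod_smul_smul x)
    fun x hx v hv => S.hgpos x (S.hsub hx) v hv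

lemma exists_sq_fderiv_V_le :
    ∃ C, 0 ≤ C ∧ ∀ x, S.V x ≤ S.E → ∀ v, fderiv ℝ S.V x v ^ 2 ≤ C * S.prod x v v :=
  S.exists_le_mul_prod
    (((S.contDiffOn_fderiv_V.continuousOn.comp continuousOn_fst fun _ hp => hp.1).clm_apply
      continuousOn_snd).pow 2)
    fun x t v => by rw [map_smul, smul_eq_mul, mul_pow]

lemma exists_hessQuad_le :
    ∃ C, 0 ≤ C ∧ ∀ x, S.V x ≤ S.E → ∀ v, S.hessQuad x v ≤ C * S.prod x v v :=
  S.exists_le_mul_prod S.continuousOn_hessQuad S.hessQuad_smul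

lemma exists_le_prod_grad_add :
    ∃ ρ > 0, ∀ x, S.V x ≤ S.E → ρ ≤ S.prod x (S.grad x) (S.grad x) + (S.E - S.V x) := by
  have hcont : ContinuousOn (fun x => S.prod x (S.grad x) (S.grad x) + (S.E - S.V x)) S.U :=
    (S.continuousOn_prod_self.comp (continuousOn_id.prodMk S.continuousOn_grad)
      fun _ hx => ⟨hx, mem_univ _⟩).add (continuousOn_const.sub S.hVC.continuousOn)
  refine S.hcomp.exists_forall_le' (hcont.mono S.hsub) fun x (hx : S.V x ≤ S.E) => ?_
  rcases hx.eq_or_lt with hE | hlt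
  · exact add_pos_of_pos_of_nonneg (S.prod_grad_grad_pos (S.hsub hx) (S.hreg x hE))
      (sub_nonneg.2 hx)
  · exact add_pos_of_nonneg_of_pos (S.prod_self_nonneg (S.hsub hx) _) (sub_pos.2 hlt)

lemma exists_sub_V_le : ∃ F, ∀ x, S.V x ≤ S.E → S.E - S.V x ≤ F := by
  obtain ⟨F, hF⟩ := S.hcomp.bddAbove_image (f := fun x => S.E - S.V x)
    (continuousOn_const.sub (S.hVC.continuousOn.mono S.hsub))
  exact ⟨F, fun x hx => hF (mem_image_of_mem _ hx)⟩

end Bounds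

section Curves

variable {S : Setting N} {q q' q'' : ℝ → Vec N} {s : ℝ}

lemma hasDerivAt_V_comp (hx : q s ∈ S.U) (hq : HasDerivAt q (q' s) s) :
    HasDerivAt (fun t => S.V (q t)) (fderiv ℝ S.V (q s) (q' s)) s :=
  (S.hVC.contDiffAt (S.hU.mem_nhds hx)).differentiableAt two_ne_zero |>.hasFDerivAt.comp_hasDerivAt
    s hq

lemma hessQuad_add_fderiv_covD (s : ℝ) :
    S.hessQuad (q s) (q' s) + fderiv ℝ S.V (q s) (S.covD q q' q' q'' s)
      = fderiv ℝ (fderiv ℝ S.V) (q s) (q' s) (q' s) + fderiv ℝ S.V (q s) (q'' s) := by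
  simp only [hessQuad, fderiv_V_apply, dotProduct, covD, mul_add, Finset.sum_add_distrib]
  ring

lemma hasDerivAt_fderiv_V_comp (hx : q s ∈ S.U) (hq : HasDerivAt q (q' s) s)
    (hq' : HasDerivAt q' (q'' s) s) :
    HasDerivAt (fun t => fderiv ℝ S.V (q t) (q' t))
      (S.hessQuad (q s) (q' s) + fderiv ℝ S.V (q s) (S.covD q q' q' q'' s)) s := by
  rw [hessQuad_add_fderiv_covD]
  have hdV := (S.contDiffOn_fderiv_V.contDiffAt (S.hU.mem_nhds hx)).differentiableAt one_ne_zero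
  exact (hdV.hasFDerivAt.comp_hasDerivAt s hq).clm_apply hq'

lemma GeoEqAt.sub_V_mul_fderiv_covD (h : S.GeoEqAt q q' q'' s) (hx : q s ∈ S.U) :
    (S.E - S.V (q s)) * fderiv ℝ S.V (q s) (S.covD q q' q' q'' s)
      = fderiv ℝ S.V (q s) (q' s) ^ 2
        - 1 / 2 * S.prod (q s) (q' s) (q' s) * S.prod (q s) (S.grad (q s)) (S.grad (q s)) := by
  have hvec : (S.E - S.V (q s)) • S.covD q q' q' q'' s
      - S.prod (q s) (S.grad (q s)) (q' s) • q' s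
      + (1 / 2 * S.prod (q s) (q' s) (q' s)) • S.grad (q s) = 0 := funext h
  have hdV := congrArg (fderiv ℝ S.V (q s)) hvec
  simp only [map_add, map_sub, map_smul, map_zero, smul_eq_mul, S.prod_grad_left hx] at hdV ⊢
  linarith

lemma GeoEqAt.hasDerivAt_mul (h : S.GeoEqAt q q' q'' s) (hx : q s ∈ S.U)
    (hq : HasDerivAt q (q' s) s) (hq' : HasDerivAt q' (q'' s) s) :
    HasDerivAt (fun t => (S.E - S.V (q t)) * -fderiv ℝ S.V (q t) (q' t))
      (1 / 2 * S.prod (q s) (q' s) (q' s) * S.prod (q s) (S.grad (q s)) (S.grad (q s))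
        - (S.E - S.V (q s)) * S.hessQuad (q s) (q' s)) s := by
  refine (((hasDerivAt_V_comp hx hq).const_sub S.E).mul
    (hasDerivAt_fderiv_V_comp hx hq hq').neg).congr_deriv ?_
  rw [Pi.neg_apply]
  linear_combination -(h.sub_V_mul_fderiv_covD hx)

end Curves

end Setting

namespace ReachesBdry

variable {S : Setting N} {a s₀ cx : ℝ} {x x' x'' : ℝ → Vec N}

lemma energy_pos (hR : ReachesBdry S a s₀ x x' x'' cx) : 0 < cx := by
  obtain ⟨-, -, -, -, -, -, hcx, -⟩ := hR
  exact hcx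

lemma V_endpoint (hR : ReachesBdry S a s₀ x x' x'' cx) : S.V (x s₀) = S.E := by
  obtain ⟨-, -, -, -, -, -, -, -, -, hend⟩ := hR
  exact hend

lemma V_le (hR : ReachesBdry S a s₀ x x' x'' cx) : ∀ s ∈ Icc a s₀, S.V (x s) ≤ S.E := by
  intro s hs
  rcases hs.2.eq_or_lt with rfl | hs'
  · exact hR.V_endpoint.le
  · obtain ⟨-, -, -, -, -, -, -, -, hlt, -⟩ := hR
    exact (hlt s ⟨hs.1, hs'⟩).le

lemma isEnergyProfile (hR : ReachesBdry S a s₀ x x' x'' cx) {A H ρ : ℝ}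
    (hA : ∀ y, S.V y ≤ S.E → ∀ v, fderiv ℝ S.V y v ^ 2 ≤ A * S.prod y v v)
    (hH : ∀ y, S.V y ≤ S.E → ∀ v, S.hessQuad y v ≤ H * S.prod y v v)
    (hρ : ∀ y, S.V y ≤ S.E → ρ ≤ S.prod y (S.grad y) (S.grad y) + (S.E - S.V y)) :
    IsEnergyProfile (2 * A) (2 * H + 1) ρ cx a s₀ (fun s => S.E - S.V (x s))
      (fun s => -fderiv ℝ S.V (x s) (x' s))
      (fun s => 1 / 2 * S.prod (x s) (x' s) (x' s) * S.prod (x s) (S.grad (x s)) (S.grad (x s))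
        - (S.E - S.V (x s)) * S.hessQuad (x s) (x' s)) := by
  have hle := hR.V_le
  have hU : ∀ s ∈ Icc a s₀, x s ∈ S.U := fun s hs => S.hsub (hle s hs)
  obtain ⟨hx, hx', hx'', -, -, hgeo, hcx, hen, hlt, -⟩ := hR
  have hpos : ∀ s ∈ Ico a s₀, 0 < S.E - S.V (x s) := fun s hs => sub_pos.2 (hlt s hs)
  refine ⟨continuousOn_const.sub (S.hVC.continuousOn.comp hx hU), hpos,
    fun s hs =>
      (Setting.hasDerivAt_V_comp (hU s (Ioo_subset_Icc_self hs)) (hx' s hs)).const_sub S.E,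
    fun s hs => (hgeo s hs).hasDerivAt_mul (hU s (Ioo_subset_Icc_self hs)) (hx' s hs) (hx'' s hs),
    fun s hs => ?_, fun s hs => ?_⟩ <;>
    have hf := hpos s (Ioo_subset_Ico_self hs) <;>
    have hxs := hle s (Ioo_subset_Icc_self hs)
  · linear_combination (S.E - S.V (x s)) * hA _ hxs (x' s) + 2 * A * hen s hs
  · have hkin : 1 / 2 * S.prod (x s) (x' s) (x' s) = cx / (S.E - S.V (x s)) := by
      rw [eq_div_iff hf.ne', ← hen s hs]; ring
    have hgrad : cx * (ρ / (S.E - S.V (x s)) - 1)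
        ≤ cx / (S.E - S.V (x s)) * S.prod (x s) (S.grad (x s)) (S.grad (x s)) := by
      calc cx * (ρ / (S.E - S.V (x s)) - 1)
          = cx / (S.E - S.V (x s)) * (ρ - (S.E - S.V (x s))) := by field_simp
        _ ≤ _ := mul_le_mul_of_nonneg_left (sub_le_iff_le_add.2 (hρ _ hxs)) (by positivity)
    have hhess : (S.E - S.V (x s)) * S.hessQuad (x s) (x' s) ≤ 2 * H * cx := by
      linear_combination (S.E - S.V (x s)) * hH _ hxs (x' s) + 2 * H * hen s hs
    rw [hkin]
    linarith

end ReachesBdry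

/-- **Remark 2.4**: near the boundary, `E − V(x(s))` behaves like `(s₀−s)^{2/3}`; hence
the Maupertuis time change `t(s)` is bounded, uniformly over all such geodesics whose
energy constant is bounded by a fixed constant. -/
theorem boundary_asymptotics {N : ℕ} (S : Setting N) :
    (∀ (a s₀ : ℝ), a < s₀ → ∀ (x x' x'' : ℝ → Vec N) (cx : ℝ),
      ReachesBdry S a s₀ x x' x'' cx →
      (∃ c₁ c₂ : ℝ, 0 < c₁ ∧ c₁ ≤ c₂ ∧ ∃ δ > (0:ℝ), ∀ s ∈ Ico (s₀ - δ) s₀, a ≤ s →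
          c₁ * (s₀ - s) ^ ((2:ℝ)/3) ≤ S.E - S.V (x s) ∧
          S.E - S.V (x s) ≤ c₂ * (s₀ - s) ^ ((2:ℝ)/3)) ∧
      (∃ B : ℝ, ∀ s ∈ Ico a s₀,
        (∫ τ in a..s, Real.sqrt cx / (S.E - S.V (x τ))) ≤ B)) ∧
    (∀ K > (0:ℝ), ∀ (a s₀ : ℝ), a < s₀ → ∃ B : ℝ,
      ∀ (x x' x'' : ℝ → Vec N) (cx : ℝ),
        ReachesBdry S a s₀ x x' x'' cx → cx ≤ K →
        ∀ s ∈ Ico a s₀,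
          (∫ τ in a..s, Real.sqrt cx / (S.E - S.V (x τ))) ≤ B) := by
  obtain ⟨A, -, hA⟩ := S.exists_sq_fderiv_V_le
  obtain ⟨H, hH0, hH⟩ := S.exists_hessQuad_le
  obtain ⟨ρ, hρ0, hρ⟩ := S.exists_le_prod_grad_add
  obtain ⟨F, hF⟩ := S.exists_sub_V_le
  have htime : ∀ {a s₀ : ℝ} {x x' x'' : ℝ → Vec N} {cx : ℝ}, ReachesBdry S a s₀ x x' x'' cx →
      ∀ s ∈ Ico a s₀, ∫ τ in a..s, √cx / (S.E - S.V (x τ))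
        ≤ (2 * √(F * (2 * A)) + √cx * (2 * H + 1) * (s₀ - a)) / ρ := fun hR =>
    (hR.isEnergyProfile hA hH hρ).integral_sqrt_div_le hR.energy_pos hρ0 (by positivity)
      fun s hs => hF _ (hR.V_le s (Ico_subset_Icc_self hs))
  refine ⟨fun a s₀ ha x x' x'' cx hR => ⟨?_, _, htime hR⟩,
    fun K _ a s₀ ha => ⟨(2 * √(F * (2 * A)) + √K * (2 * H + 1) * (s₀ - a)) / ρ,
      fun x x' x'' cx hR hK s hs => (htime hR s hs).trans ?_⟩⟩
  · obtain ⟨c₁, c₂, hc₁, hc, δ, hδ, hbounds⟩ :=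
      (hR.isEnergyProfile hA hH hρ).exists_rpow_bounds ha hR.energy_pos hρ0
        (sub_eq_zero.2 hR.V_endpoint.symm)
    exact ⟨c₁, c₂, hc₁, hc, δ, hδ, fun s hs _ => hbounds s hs⟩
  · have : 0 ≤ s₀ - a := sub_nonneg.2 ha.le
    gcongr

end
end JacobiPaper
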